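/- Let γ : ℝ × [0,T) → ℝ² be a curve diffusion flow such that at every time t the curve γ(·,t) has winding number zero, i.e. ∫₀^{2π} κ |∂_u γ| du = 0. Then for all t ∈ [0,T) one has L(t)⁴ ≤ L(0)⁴ − 768 π² t; in particular T ≤ L(0)⁴ / (768 π²). -/

import Mathlib

open Real MeasureTheory Filter

/-- Euclidean inner product on `ℝ × ℝ`. -/
def innerP (a b : ℝ × ℝ) : ℝ := a.1 * b.1 + a.2 * b.2

/-- Speed `|γ'|` of a plane curve in a general parametrisation. -/
noncomputable def speed (γ : ℝ → ℝ × ℝ) (u : ℝ) : ℝ :=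
  Real.sqrt ((deriv γ u).1 ^ 2 + (deriv γ u).2 ^ 2)

/-- Unit normal `ν = |γ'|⁻¹ (y', -x')`. -/
noncomputable def nuG (γ : ℝ → ℝ × ℝ) (u : ℝ) : ℝ × ℝ :=
  ((deriv γ u).2 / speed γ u, -(deriv γ u).1 / speed γ u)

/-- Arc-length derivative `∂_s = |γ'|⁻¹ ∂_u` of a scalar function. -/
noncomputable def arcD (γ : ℝ → ℝ × ℝ) (f : ℝ → ℝ) (u : ℝ) : ℝ :=
  (speed γ u)⁻¹ * deriv f u

/-- Arc-length derivative of a vector-valued function. -/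
noncomputable def arcDV (γ : ℝ → ℝ × ℝ) (F : ℝ → ℝ × ℝ) (u : ℝ) : ℝ × ℝ :=
  (speed γ u)⁻¹ • deriv F u

/-- Curvature `κ = ⟨∂_s² γ, ν⟩`. -/
noncomputable def curvG (γ : ℝ → ℝ × ℝ) (u : ℝ) : ℝ :=
  innerP (arcDV γ (arcDV γ γ) u) (nuG γ u)

/-- `κ_s`, the arc-length derivative of the curvature. -/
noncomputable def curvGS (γ : ℝ → ℝ × ℝ) (u : ℝ) : ℝ := arcD γ (curvG γ) u

/-- `κ_ss`, the second arc-length derivative of the curvature. -/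
noncomputable def curvGSS (γ : ℝ → ℝ × ℝ) (u : ℝ) : ℝ := arcD γ (curvGS γ) u

/-- Length of the closed curve `γ(·,t)` over one period `[0, 2π]`. -/
noncomputable def clen (γ : ℝ → ℝ → ℝ × ℝ) (t : ℝ) : ℝ :=
  ∫ u in (0:ℝ)..(2 * Real.pi), speed (fun u' => γ u' t) u

/-- Weighted Poincaré inequality for functions vanishing at both endpoints, with the constant `9`
in place of the optimal `π ^ 2`. -/
theorem nine_mul_integral_sq_le_of_eq_zero {a b : ℝ} (hab : a < b) {f f' v : ℝ → ℝ}
    (hf : ∀ u, HasDerivAt f (f' u) u) (hf' : Continuous f') (hv : Continuous v)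
    (hpos : ∀ u, 0 < v u) (ha : f a = 0) (hb : f b = 0) :
    9 * ∫ u in a..b, f u ^ 2 * v u ≤ (∫ u in a..b, v u) ^ 2 * ∫ u in a..b, f' u ^ 2 / v u := by
  have hfc : Continuous f := continuous_iff_continuousAt.2 fun u => (hf u).continuousAt
  set S := ∫ u in a..b, v u with hS
  have hSpos : 0 < S := intervalIntegral.intervalIntegral_pos_of_pos
    (hv.intervalIntegrable _ _) hpos hab
  set s : ℝ → ℝ := fun u => ∫ w in a..u, v w with hs
  have hsd : ∀ u, HasDerivAt s (v u) u := fun u =>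
    intervalIntegral.integral_hasDerivAt_right (hv.intervalIntegrable _ _)
      (hv.stronglyMeasurableAtFilter _ _) hv.continuousAt
  have hsc : Continuous s := continuous_iff_continuousAt.2 fun u => (hsd u).continuousAt
  set m : ℝ := 3 / S with hm
  set φ : ℝ → ℝ := fun u => m * (s u - S / 2) with hφ
  have hφd : ∀ u, HasDerivAt φ (m * v u) u := fun u => ((hsd u).sub_const _).const_mul m
  have hφc : Continuous φ := by fun_prop
  have hmono : Monotone s := monotone_of_deriv_nonneg (fun u => (hsd u).differentiableAt)
    fun u => (hsd u).deriv ▸ (hpos u).le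
  have hcos : ∀ u ∈ Set.Icc a b, 0 < cos (φ u) := by
    intro u hu
    have h1 : 0 ≤ s u := by simpa [hs] using hmono hu.1
    have h2 : s u ≤ S := hmono hu.2
    have h3 : m * S = 3 := by rw [hm]; field_simp
    have hmpos : 0 < m := by positivity
    apply cos_pos_of_mem_Ioo
    constructor <;> simp only [hφ] <;> nlinarith [pi_gt_three]
  set ψ : ℝ → ℝ := fun u => m * tan (φ u) with hψ
  have hψd : ∀ u ∈ Set.Icc a b, HasDerivAt ψ ((m ^ 2 + ψ u ^ 2) * v u) u := by
    intro u hu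
    have hc := (hcos u hu).ne'
    convert! ((hasDerivAt_tan hc).comp u (hφd u)).const_mul m using 1
    simp only [hψ, tan_eq_sin_div_cos]
    field_simp
    rw [cos_sq_add_sin_sq, mul_one]
  have hψc : ContinuousOn ψ (Set.Icc a b) := fun u hu => (hψd u hu).continuousAt.continuousWithinAt
  set D : ℝ → ℝ := fun u => (m ^ 2 + ψ u ^ 2) * v u * f u ^ 2 + ψ u * (2 * f u * f' u) with hD
  have hDc : ContinuousOn D (Set.uIcc a b) := by
    rw [Set.uIcc_of_le hab.le]
    fun_prop
  have hDint : ∫ u in a..b, D u = 0 := by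
    rw [intervalIntegral.integral_eq_sub_of_hasDerivAt (f := fun u => ψ u * f u ^ 2) _
      hDc.intervalIntegrable]
    · simp [ha, hb]
    · intro u hu
      rw [Set.uIcc_of_le hab.le] at hu
      convert! (hψd u hu).mul ((hf u).pow 2) using 1
      simp [hD]
  have hI1 : IntervalIntegrable (fun u => f' u ^ 2 / v u) volume a b :=
    (Continuous.div (by fun_prop) hv fun u => (hpos u).ne').intervalIntegrable _ _
  have hI2 : IntervalIntegrable (fun u => m ^ 2 * (f u ^ 2 * v u)) volume a b :=
    Continuous.intervalIntegrable (by fun_prop) _ _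
  have key : 0 ≤ ∫ u in a..b, (f' u ^ 2 / v u - m ^ 2 * (f u ^ 2 * v u) + D u) := by
    apply intervalIntegral.integral_nonneg hab.le
    intro u _
    have hvu := hpos u
    have : f' u ^ 2 / v u - m ^ 2 * (f u ^ 2 * v u) + D u
        = (f' u + ψ u * f u * v u) ^ 2 / v u := by
      simp only [hD]; field_simp; ring
    rw [this]; positivity
  rw [intervalIntegral.integral_add (hI1.sub hI2) hDc.intervalIntegrable,
    intervalIntegral.integral_sub hI1 hI2, hDint, intervalIntegral.integral_const_mul] at key
  have h9 : S ^ 2 * m ^ 2 = 9 := by rw [hm]; field_simp; norm_num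
  rw [← h9, mul_assoc]
  exact mul_le_mul_of_nonneg_left (by linarith) (sq_nonneg S)

/-- Along a positive periodic weight, a continuous periodic function takes the same value at two
points that halve the total weight of a period. -/
theorem exists_eq_and_integral_eq_half {c : ℝ} (hc : 0 < c) {f v : ℝ → ℝ} (hf : Continuous f)
    (hv : Continuous v) (hpos : ∀ u, 0 < v u) (hfp : f.Periodic c) (hvp : v.Periodic c) :
    ∃ a b, a < b ∧ b < a + c ∧ f a = f b ∧
      (∫ u in a..b, v u) = (∫ u in (0:ℝ)..c, v u) / 2 := by
  set L := ∫ u in (0:ℝ)..c, v u with hL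
  have hLpos : 0 < L := intervalIntegral.intervalIntegral_pos_of_pos
    (hv.intervalIntegrable _ _) hpos hc
  set s : ℝ → ℝ := fun u => ∫ w in (0:ℝ)..u, v w with hs
  have hsd : ∀ u, HasDerivAt s (v u) u := fun u =>
    intervalIntegral.integral_hasDerivAt_right (hv.intervalIntegrable _ _)
      (hv.stronglyMeasurableAtFilter _ _) hv.continuousAt
  have hsc : Continuous s := continuous_iff_continuousAt.2 fun u => (hsd u).continuousAt
  have hmono : StrictMono s := strictMono_of_deriv_pos fun u => (hsd u).deriv ▸ hpos u
  have hsub : ∀ a b, ∫ u in a..b, v u = s b - s a := fun a b =>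
    (intervalIntegral.integral_interval_sub_left (hv.intervalIntegrable _ _)
      (hv.intervalIntegrable _ _)).symm
  have hshift : ∀ u, s (u + c) = s u + L := by
    intro u
    have := hvp.intervalIntegral_add_eq u 0
    rw [hsub, zero_add] at this
    linarith
  have hsurj : Function.Surjective s := hsc.surjective
    (hvp.tendsto_atTop_intervalIntegral_of_pos hLpos hc)
    (hvp.tendsto_atBot_intervalIntegral_of_pos hLpos hc)
  set e : ℝ ≃o ℝ := StrictMono.orderIsoOfSurjective s hmono hsurj with he
  have hse : ∀ x, s (e.symm x) = x := fun x => e.apply_symm_apply x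
  have hec : Continuous e.symm := e.symm.continuous
  have heL : e.symm L = e.symm 0 + c := by
    apply hmono.injective
    rw [hse, hshift, hse, zero_add]
  have hc0 : ContinuousOn (fun x => f (e.symm (x + L / 2)) - f (e.symm x)) (Set.uIcc 0 (L / 2)) := by
    fun_prop
  obtain ⟨x, -, hx⟩ : (0:ℝ) ∈ (fun x => f (e.symm (x + L / 2)) - f (e.symm x)) ''
      Set.uIcc 0 (L / 2) := by
    apply intermediate_value_uIcc hc0
    simp only [zero_add, add_halves, heL, hfp (e.symm 0)]
    rcases le_total (f (e.symm (L / 2))) (f (e.symm 0)) with h | h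
    · exact Set.mem_uIcc_of_le (by linarith) (by linarith)
    · exact Set.mem_uIcc_of_ge (by linarith) (by linarith)
  refine ⟨e.symm x, e.symm (x + L / 2), e.symm.strictMono (by linarith), ?_, by linarith, ?_⟩
  · rw [← hmono.lt_iff_lt, hshift, hse, hse]
    linarith
  · rw [hsub, hse, hse]
    ring

/-- Weighted Wirtinger inequality for periodic functions of mean zero, with the constant `36` in
place of the optimal `4 * π ^ 2`. -/
theorem weighted_wirtinger {c : ℝ} (hc : 0 < c) {f f' v : ℝ → ℝ}
    (hf : ∀ u, HasDerivAt f (f' u) u) (hf' : Continuous f') (hv : Continuous v)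
    (hpos : ∀ u, 0 < v u) (hfp : f.Periodic c) (hfp' : f'.Periodic c) (hvp : v.Periodic c)
    (hmean : ∫ u in (0:ℝ)..c, f u * v u = 0) :
    36 * ∫ u in (0:ℝ)..c, f u ^ 2 * v u ≤
      (∫ u in (0:ℝ)..c, v u) ^ 2 * ∫ u in (0:ℝ)..c, f' u ^ 2 / v u := by
  have hfc : Continuous f := continuous_iff_continuousAt.2 fun u => (hf u).continuousAt
  obtain ⟨a, b, hab, hba, hfab, hhalf⟩ := exists_eq_and_integral_eq_half hc hfc hv hpos hfp hvp
  have hper : ∀ g : ℝ → ℝ, g.Periodic c → Continuous g →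
      ∫ u in (0:ℝ)..c, g u = (∫ u in a..b, g u) + ∫ u in b..(a + c), g u := by
    intro g hg hgc
    rw [intervalIntegral.integral_add_adjacent_intervals (hgc.intervalIntegrable _ _)
      (hgc.intervalIntegrable _ _), hg.intervalIntegral_add_eq a 0, zero_add]
  have hI : Continuous fun u => f' u ^ 2 / v u :=
    Continuous.div (by fun_prop) hv fun u => (hpos u).ne'
  have hLpos : 0 < ∫ u in (0:ℝ)..c, v u := intervalIntegral.intervalIntegral_pos_of_pos
    (hv.intervalIntegrable _ _) hpos hc
  set g : ℝ → ℝ := fun u => f u - f a with hg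
  have hgc : Continuous g := by fun_prop
  have hgd : ∀ u, HasDerivAt g (f' u) u := fun u => (hf u).sub_const _
  have h1 := nine_mul_integral_sq_le_of_eq_zero hab hgd hf' hv hpos (by simp [hg])
    (by simp [hg, hfab])
  have h2 := nine_mul_integral_sq_le_of_eq_zero hba hgd hf' hv hpos (by simp [hg, hfab])
    (by simp [hg, hfp a])
  have hhalf2 := hper v hvp hv
  have hE := hper (fun u => f' u ^ 2 / v u) (fun u => by simp [hfp' u, hvp u]) hI
  have hG := hper (fun u => g u ^ 2 * v u) (fun u => by simp [hg, hfp u, hvp u]) (by fun_prop)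
  have hexp : ∫ u in (0:ℝ)..c, g u ^ 2 * v u = (∫ u in (0:ℝ)..c, f u ^ 2 * v u)
      + f a ^ 2 * ∫ u in (0:ℝ)..c, v u := by
    have : ∀ u, g u ^ 2 * v u = f u ^ 2 * v u - 2 * f a * (f u * v u) + f a ^ 2 * v u := by
      intro u; simp only [hg]; ring
    simp_rw [this]
    rw [intervalIntegral.integral_add, intervalIntegral.integral_sub,
      intervalIntegral.integral_const_mul, intervalIntegral.integral_const_mul, hmean]
    · ring
    all_goals exact Continuous.intervalIntegrable (by fun_prop) _ _
  set L := ∫ u in (0:ℝ)..c, v u with hL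
  have hhalf3 : ∫ u in b..(a + c), v u = L / 2 := by linarith
  rw [hhalf] at h1
  rw [hhalf3] at h2
  have := mul_nonneg (sq_nonneg (f a)) hLpos.le
  rw [hE]
  nlinarith

section RegularCurve

variable {c : ℝ → ℝ × ℝ}

theorem speed_pos (hreg : ∀ u, deriv c u ≠ 0) (u : ℝ) : 0 < speed c u := by
  apply Real.sqrt_pos.2
  by_contra! h
  have h1 : (deriv c u).1 = 0 := by nlinarith [sq_nonneg (deriv c u).1, sq_nonneg (deriv c u).2]
  have h2 : (deriv c u).2 = 0 := by nlinarith [sq_nonneg (deriv c u).1, sq_nonneg (deriv c u).2]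
  exact hreg u (Prod.ext h1 h2)

theorem speed_sq (c : ℝ → ℝ × ℝ) (u : ℝ) :
    speed c u ^ 2 = (deriv c u).1 ^ 2 + (deriv c u).2 ^ 2 :=
  Real.sq_sqrt (by positivity)

theorem contDiff_deriv_of_smooth {E : Type*} [NormedAddCommGroup E] [NormedSpace ℝ E] {f : ℝ → E}
    (hf : ContDiff ℝ (⊤ : ℕ∞) f) : ContDiff ℝ (⊤ : ℕ∞) (deriv f) :=
  (contDiff_infty_iff_deriv.1 hf).2

theorem contDiff_speed (hc : ContDiff ℝ (⊤ : ℕ∞) c) (hreg : ∀ u, deriv c u ≠ 0) :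
    ContDiff ℝ (⊤ : ℕ∞) (speed c) := by
  have hd := contDiff_deriv_of_smooth hc
  refine ContDiff.sqrt ((hd.fst.pow 2).add (hd.snd.pow 2)) fun u => ?_
  rw [← speed_sq]
  exact (pow_pos (speed_pos hreg u) 2).ne'

theorem contDiff_arcD {f : ℝ → ℝ} (hc : ContDiff ℝ (⊤ : ℕ∞) c) (hreg : ∀ u, deriv c u ≠ 0)
    (hf : ContDiff ℝ (⊤ : ℕ∞) f) : ContDiff ℝ (⊤ : ℕ∞) (arcD c f) :=
  ((contDiff_speed hc hreg).inv fun u => (speed_pos hreg u).ne').mul (contDiff_deriv_of_smooth hf)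

theorem contDiff_arcDV {F : ℝ → ℝ × ℝ} (hc : ContDiff ℝ (⊤ : ℕ∞) c) (hreg : ∀ u, deriv c u ≠ 0)
    (hF : ContDiff ℝ (⊤ : ℕ∞) F) : ContDiff ℝ (⊤ : ℕ∞) (arcDV c F) :=
  ((contDiff_speed hc hreg).inv fun u => (speed_pos hreg u).ne').smul (contDiff_deriv_of_smooth hF)

theorem contDiff_nuG (hc : ContDiff ℝ (⊤ : ℕ∞) c) (hreg : ∀ u, deriv c u ≠ 0) :
    ContDiff ℝ (⊤ : ℕ∞) (nuG c) := by
  have hd := contDiff_deriv_of_smooth hc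
  have hs := contDiff_speed hc hreg
  exact (hd.snd.div hs fun u => (speed_pos hreg u).ne').prodMk
    (hd.fst.neg.div hs fun u => (speed_pos hreg u).ne')

theorem contDiff_curvG (hc : ContDiff ℝ (⊤ : ℕ∞) c) (hreg : ∀ u, deriv c u ≠ 0) :
    ContDiff ℝ (⊤ : ℕ∞) (curvG c) := by
  have h1 := contDiff_arcDV hc hreg (contDiff_arcDV hc hreg hc)
  have h2 := contDiff_nuG hc hreg
  exact (h1.fst.mul h2.fst).add (h1.snd.mul h2.snd)

theorem periodic_deriv {E : Type*} [NormedAddCommGroup E] [NormedSpace ℝ E] {f : ℝ → E} {d : ℝ}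
    (hf : f.Periodic d) : (deriv f).Periodic d := fun u => by
  rw [← deriv_comp_add_const]
  exact congrArg (fun g => deriv g u) (funext hf)

theorem periodic_speed {d : ℝ} (hc : c.Periodic d) : (speed c).Periodic d := fun u => by
  simp only [speed, periodic_deriv hc u]

theorem periodic_arcD {d : ℝ} {f : ℝ → ℝ} (hc : c.Periodic d) (hf : f.Periodic d) :
    (arcD c f).Periodic d := fun u => by
  simp only [arcD, periodic_deriv hf u, periodic_speed hc u]

theorem periodic_arcDV {d : ℝ} {F : ℝ → ℝ × ℝ} (hc : c.Periodic d) (hF : F.Periodic d) :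
    (arcDV c F).Periodic d := fun u => by
  simp only [arcDV, periodic_deriv hF u, periodic_speed hc u]

theorem periodic_curvG {d : ℝ} (hc : c.Periodic d) : (curvG c).Periodic d := fun u => by
  simp only [curvG, nuG, periodic_arcDV hc (periodic_arcDV hc hc) u, periodic_deriv hc u,
    periodic_speed hc u]

/-- The unit tangent `∂_s γ` has Euclidean norm one. -/
theorem arcDV_self_sq (hreg : ∀ u, deriv c u ≠ 0) (u : ℝ) :
    (arcDV c c u).1 ^ 2 + (arcDV c c u).2 ^ 2 = 1 := by
  have h := speed_pos hreg u
  have h2 := speed_sq c u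
  simp only [arcDV, Prod.smul_fst, Prod.smul_snd, smul_eq_mul]
  field_simp
  exact h2.symm

/-- Frenet equation `∂_s τ = κ ν` for the unit tangent. -/
theorem hasDerivAt_arcDV_self (hc : ContDiff ℝ (⊤ : ℕ∞) c) (hreg : ∀ u, deriv c u ≠ 0) (u : ℝ) :
    HasDerivAt (fun w => (arcDV c c w).1) (curvG c u * speed c u * (arcDV c c u).2) u ∧
      HasDerivAt (fun w => (arcDV c c w).2) (-(curvG c u * speed c u * (arcDV c c u).1)) u := by
  have hv := speed_pos hreg u
  have hd : HasDerivAt (arcDV c c) (deriv (arcDV c c) u) u :=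
    ((contDiff_arcDV hc hreg hc).differentiable (by simp) u).hasDerivAt
  have h1 : HasDerivAt (fun w => (arcDV c c w).1) (deriv (arcDV c c) u).1 u := hd.fst
  have h2 : HasDerivAt (fun w => (arcDV c c w).2) (deriv (arcDV c c) u).2 u := hd.snd
  set p := (arcDV c c u).1 with hp
  set q := (arcDV c c u).2 with hq
  have hunit : p ^ 2 + q ^ 2 = 1 := arcDV_self_sq hreg u
  have horth : p * (deriv (arcDV c c) u).1 + q * (deriv (arcDV c c) u).2 = 0 := by
    have h3 := (h1.pow 2).add (h2.pow 2)
    have h4 : (fun w => (arcDV c c w).1) ^ 2 + (fun w => (arcDV c c w).2) ^ 2 = fun _ => (1:ℝ) :=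
      funext fun w => arcDV_self_sq hreg w
    rw [h4] at h3
    have h5 := h3.unique (hasDerivAt_const u (1:ℝ))
    simp only [← hp, ← hq] at h5
    norm_num at h5
    linarith
  have hk : curvG c u * speed c u
      = (deriv (arcDV c c) u).1 * q - (deriv (arcDV c c) u).2 * p := by
    have hp' : p = (speed c u)⁻¹ * (deriv c u).1 := rfl
    have hq' : q = (speed c u)⁻¹ * (deriv c u).2 := rfl
    rw [hp', hq', curvG, arcDV, innerP, nuG]
    simp only [Prod.smul_fst, Prod.smul_snd, smul_eq_mul]
    field_simp
    ring
  rw [hk]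
  set a := (deriv (arcDV c c) u).1
  set b := (deriv (arcDV c c) u).2
  constructor
  · convert! h1 using 1
    linear_combination (-p) * horth + a * hunit
  · convert! h2 using 1
    linear_combination (-q) * horth + b * hunit

/-- For a closed regular curve of winding number zero, `L ^ 3 * ∫ κ_s ^ 2 ds` is at least
`192 * π ^ 2`. -/
theorem le_length_pow_mul_integral_curvGS_sq (hc : ContDiff ℝ (⊤ : ℕ∞) c)
    (hreg : ∀ u, deriv c u ≠ 0) (hper : c.Periodic (2 * π))
    (hwind : ∫ u in (0:ℝ)..(2 * π), curvG c u * speed c u = 0) :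
    192 * π ^ 2 ≤ (∫ u in (0:ℝ)..(2 * π), speed c u) ^ 3 *
      ∫ u in (0:ℝ)..(2 * π), curvGS c u ^ 2 * speed c u := by
  have hpi : 0 < 2 * π := by positivity
  have hpos := speed_pos hreg
  have hv : Continuous (speed c) := (contDiff_speed hc hreg).continuous
  have hvp := periodic_speed hper
  have hk : Continuous (curvG c) := (contDiff_curvG hc hreg).continuous
  have hkp := periodic_curvG hper
  have hkv : Continuous fun u => curvG c u * speed c u := hk.mul hv
  have hkvp : Function.Periodic (fun u => curvG c u * speed c u) (2 * π) := hkp.mul hvp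
  set L := ∫ u in (0:ℝ)..(2 * π), speed c u with hL
  have hLpos : 0 < L := intervalIntegral.intervalIntegral_pos_of_pos
    (hv.intervalIntegrable _ _) hpos hpi
  -- the tangent angle
  set θ : ℝ → ℝ := fun u => ∫ w in (0:ℝ)..u, curvG c w * speed c w with hθ
  have hθd : ∀ u, HasDerivAt θ (curvG c u * speed c u) u := fun u =>
    intervalIntegral.integral_hasDerivAt_right (hkv.intervalIntegrable _ _)
      (hkv.stronglyMeasurableAtFilter _ _) hkv.continuousAt
  have hθc : Continuous θ := continuous_iff_continuousAt.2 fun u => (hθd u).continuousAt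
  have hθp : θ.Periodic (2 * π) := by
    intro u
    have h := hkvp.intervalIntegral_add_eq_add 0 u fun _ _ => hkv.intervalIntegrable _ _
    simp only [zero_add, hwind, add_zero] at h
    exact h
  set p : ℝ → ℝ := fun u => (arcDV c c u).1 with hp
  set q : ℝ → ℝ := fun u => (arcDV c c u).2 with hq
  have hτ : ContDiff ℝ (⊤ : ℕ∞) (arcDV c c) := contDiff_arcDV hc hreg hc
  have hpc : Continuous p := hτ.continuous.fst
  have hqc : Continuous q := hτ.continuous.snd
  have hpd : ∀ u, HasDerivAt p (curvG c u * speed c u * q u) u := fun u =>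
    (hasDerivAt_arcDV_self hc hreg u).1
  have hqd : ∀ u, HasDerivAt q (-(curvG c u * speed c u * p u)) u := fun u =>
    (hasDerivAt_arcDV_self hc hreg u).2
  have hcd : ∀ u, HasDerivAt c (deriv c u) u := fun u =>
    (hc.differentiable (by simp) u).hasDerivAt
  have hpint : ∫ u in (0:ℝ)..(2 * π), p u * speed c u = 0 := by
    rw [intervalIntegral.integral_eq_sub_of_hasDerivAt (f := fun u => (c u).1) _
      (Continuous.intervalIntegrable (by fun_prop) _ _)]
    · have := hper 0
      rw [zero_add] at this
      simp [this]
    · intro u _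
      have hcu : HasDerivAt (fun u => (c u).1) (deriv c u).1 u := (hcd u).fst
      convert! hcu using 1
      have := (hpos u).ne'
      simp only [hp, arcDV, Prod.smul_fst, smul_eq_mul]
      field_simp
  have hqint : ∫ u in (0:ℝ)..(2 * π), q u * speed c u = 0 := by
    rw [intervalIntegral.integral_eq_sub_of_hasDerivAt (f := fun u => (c u).2) _
      (Continuous.intervalIntegrable (by fun_prop) _ _)]
    · have := hper 0
      rw [zero_add] at this
      simp [this]
    · intro u _
      have hcu : HasDerivAt (fun u => (c u).2) (deriv c u).2 u := (hcd u).snd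
      convert! hcu using 1
      have := (hpos u).ne'
      simp only [hq, arcDV, Prod.smul_snd, smul_eq_mul]
      field_simp
  have hA : ∀ u, p u * cos (θ u) - q u * sin (θ u) = p 0 := by
    intro u
    have hd : ∀ w, HasDerivAt (fun u => p u * cos (θ u) - q u * sin (θ u)) 0 w := fun w => by
      convert! ((hpd w).mul (hθd w).cos).sub ((hqd w).mul (hθd w).sin) using 1
      ring
    have := is_const_of_deriv_eq_zero (fun w => (hd w).differentiableAt) (fun w => (hd w).deriv) u 0
    simpa [hθ] using this
  have hB : ∀ u, p u * sin (θ u) + q u * cos (θ u) = q 0 := by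
    intro u
    have hd : ∀ w, HasDerivAt (fun u => p u * sin (θ u) + q u * cos (θ u)) 0 w := fun w => by
      convert! ((hpd w).mul (hθd w).sin).add ((hqd w).mul (hθd w).cos) using 1
      ring
    have := is_const_of_deriv_eq_zero (fun w => (hd w).differentiableAt) (fun w => (hd w).deriv) u 0
    simpa [hθ] using this
  have hunit : ∀ u, p u ^ 2 + q u ^ 2 = 1 := arcDV_self_sq hreg
  set m : ℝ := (∫ u in (0:ℝ)..(2 * π), θ u * speed c u) / L with hm
  set f : ℝ → ℝ := fun u => θ u - m with hf
  have hfc : Continuous f := by fun_prop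
  have hcosf : ∀ u, cos (f u) = (p 0 * cos m + q 0 * sin m) * p u
      + (q 0 * cos m - p 0 * sin m) * q u := by
    intro u
    rw [hf]
    simp only [cos_sub]
    rw [← hA u, ← hB u]
    linear_combination (-(cos (θ u) * cos m + sin (θ u) * sin m)) * hunit u
  have hcosint : ∫ u in (0:ℝ)..(2 * π), cos (f u) * speed c u = 0 := by
    have : ∀ u, cos (f u) * speed c u = (p 0 * cos m + q 0 * sin m) * (p u * speed c u)
      + (q 0 * cos m - p 0 * sin m) * (q u * speed c u) := fun u => by rw [hcosf]; ring
    simp_rw [this]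
    rw [intervalIntegral.integral_add, intervalIntegral.integral_const_mul,
      intervalIntegral.integral_const_mul, hpint, hqint]
    · simp
    all_goals exact Continuous.intervalIntegrable (by fun_prop) _ _
  have hfsq : 2 * L ≤ ∫ u in (0:ℝ)..(2 * π), f u ^ 2 * speed c u := by
    have h : ∫ u in (0:ℝ)..(2 * π), (2 * speed c u - 2 * (cos (f u) * speed c u)) ≤
        ∫ u in (0:ℝ)..(2 * π), f u ^ 2 * speed c u := by
      apply intervalIntegral.integral_mono_on hpi.le
      · exact Continuous.intervalIntegrable (by fun_prop) _ _
      · exact Continuous.intervalIntegrable (by fun_prop) _ _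
      · intro u _
        nlinarith [hpos u, one_sub_sq_div_two_le_cos (x := f u)]
    rw [intervalIntegral.integral_sub, intervalIntegral.integral_const_mul,
      intervalIntegral.integral_const_mul, hcosint] at h
    · linarith
    all_goals exact Continuous.intervalIntegrable (by fun_prop) _ _
  have hfmean : ∫ u in (0:ℝ)..(2 * π), f u * speed c u = 0 := by
    simp only [hf, sub_mul]
    rw [intervalIntegral.integral_sub, intervalIntegral.integral_const_mul, ← hL, hm]
    · field_simp
      ring
    all_goals exact Continuous.intervalIntegrable (by fun_prop) _ _
  have hW1 := weighted_wirtinger hpi (f := f) (fun u => (hθd u).sub_const m) hkv hv hpos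
    (fun u => by simp [hf, hθp u]) hkvp hvp hfmean
  have hkd : ContDiff ℝ (⊤ : ℕ∞) (curvG c) := contDiff_curvG hc hreg
  have hW2 := weighted_wirtinger hpi (f := curvG c)
    (fun u => (hkd.differentiable (by simp) u).hasDerivAt)
    (contDiff_deriv_of_smooth hkd).continuous hv hpos hkp (periodic_deriv hkp) hvp hwind
  have e1 : ∀ u, (curvG c u * speed c u) ^ 2 / speed c u = curvG c u ^ 2 * speed c u := fun u => by
    have := (hpos u).ne'
    field_simp
  have e2 : ∀ u, deriv (curvG c) u ^ 2 / speed c u = curvGS c u ^ 2 * speed c u := fun u => by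
    have := (hpos u).ne'
    rw [curvGS, arcD]
    field_simp
  simp_rw [e1] at hW1
  simp_rw [e2] at hW2
  rw [← hL] at hW1 hW2
  set K := ∫ u in (0:ℝ)..(2 * π), curvG c u ^ 2 * speed c u
  set E := ∫ u in (0:ℝ)..(2 * π), curvGS c u ^ 2 * speed c u
  have h72 : 72 ≤ L * K := by
    have : L * 72 ≤ L * (L * K) := by nlinarith
    exact le_of_mul_le_mul_left this hLpos
  have hE : 36 * (L * K) ≤ L ^ 3 * E := by nlinarith [mul_le_mul_of_nonneg_left hW2 hLpos.le]
  nlinarith [pi_lt_d2, pi_pos]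

end RegularCurve

/-- Differentiation under the integral sign over a compact interval, for an integrand with jointly
continuous partial derivative. -/
theorem hasDerivAt_intervalIntegral_of_continuousOn {a b t : ℝ} {I : Set ℝ} (hI : I ∈ nhds t)
    {g g' : ℝ → ℝ → ℝ} (hg : ∀ x ∈ I, Continuous fun u => g u x)
    (hg' : ContinuousOn (fun z : ℝ × ℝ => g' z.1 z.2) (Set.univ ×ˢ I))
    (hd : ∀ u, ∀ x ∈ I, HasDerivAt (fun x => g u x) (g' u x) x) :
    HasDerivAt (fun x => ∫ u in a..b, g u x) (∫ u in a..b, g' u t) t := by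
  obtain ⟨ε, hε, hsub⟩ := Metric.nhds_basis_closedBall.mem_iff.1 hI
  have hK : IsCompact (Set.uIcc a b ×ˢ Metric.closedBall t ε) :=
    isCompact_uIcc.prod (isCompact_closedBall t ε)
  obtain ⟨C, hC⟩ := hK.exists_bound_of_continuousOn
    (hg'.mono (Set.prod_mono (Set.subset_univ _) hsub))
  have ht : t ∈ I := mem_of_mem_nhds hI
  have hc' : Continuous fun u => g' u t :=
    hg'.comp_continuous (f := fun u : ℝ => (u, t)) (by fun_prop) fun u => ⟨Set.mem_univ _, ht⟩
  refine (intervalIntegral.hasDerivAt_integral_of_dominated_loc_of_deriv_le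
    (F := fun x u => g u x) (F' := fun x u => g' u x) (bound := fun _ => C)
    (Metric.closedBall_mem_nhds t hε) ?_ ((hg t ht).intervalIntegrable _ _)
    hc'.aestronglyMeasurable ?_ (by simp) ?_).2
  · filter_upwards [hI] with x hx using (hg x hx).aestronglyMeasurable
  · exact Eventually.of_forall fun u hu x hx => hC (u, x) ⟨Set.uIoc_subset_uIcc hu, hx⟩
  · exact Eventually.of_forall fun u _ x hx => hd u x (hsub hx)

/-- The mixed second partial derivative of a smooth family of curves. -/
theorem exists_mixed_partial {E : Type*} [NormedAddCommGroup E] [NormedSpace ℝ E]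
    {γ : ℝ → ℝ → E} {J : Set ℝ} (hJ : IsOpen J)
    (hsmooth : ContDiffOn ℝ (⊤ : ℕ∞) (fun p : ℝ × ℝ => γ p.1 p.2) (Set.univ ×ˢ J)) :
    ∃ W : ℝ → ℝ → E, ContinuousOn (fun z : ℝ × ℝ => W z.1 z.2) (Set.univ ×ˢ J) ∧
      ContinuousOn (fun z : ℝ × ℝ => deriv (fun u' => γ u' z.2) z.1) (Set.univ ×ˢ J) ∧
      (∀ u, ∀ x ∈ J, HasDerivAt (fun x' => deriv (fun u' => γ u' x') u) (W u x) x) ∧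
      ∀ u, ∀ x ∈ J, HasDerivAt (fun u' => deriv (fun t' => γ u' t') x) (W u x) u := by
  obtain ⟨F, hF⟩ : ∃ F : ℝ × ℝ → E, ∀ u t, γ u t = F (u, t) := ⟨fun p => γ p.1 p.2, fun _ _ => rfl⟩
  obtain rfl : γ = fun u t => F (u, t) := funext fun u => funext (hF u)
  clear hF
  have hFU : ContDiffOn ℝ (⊤ : ℕ∞) F (Set.univ ×ˢ J) := hsmooth
  have hUo : IsOpen ((Set.univ : Set ℝ) ×ˢ J) := isOpen_univ.prod hJ
  have hDU : ContDiffOn ℝ (⊤ : ℕ∞) (fderiv ℝ F) (Set.univ ×ˢ J) :=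
    hFU.fderiv_of_isOpen hUo (by simp)
  have hDDU : ContDiffOn ℝ (⊤ : ℕ∞) (fderiv ℝ (fderiv ℝ F)) (Set.univ ×ˢ J) :=
    hDU.fderiv_of_isOpen hUo (by simp)
  have hmem : ∀ u, ∀ x ∈ J, Set.univ ×ˢ J ∈ nhds (u, x) := fun u x hx =>
    hUo.mem_nhds ⟨Set.mem_univ _, hx⟩
  have hF1 : ∀ u, ∀ x ∈ J, HasFDerivAt F (fderiv ℝ F (u, x)) (u, x) := fun u x hx =>
    ((hFU.contDiffAt (hmem u x hx)).differentiableAt (by simp)).hasFDerivAt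
  have hF2 : ∀ u, ∀ x ∈ J,
      HasFDerivAt (fderiv ℝ F) (fderiv ℝ (fderiv ℝ F) (u, x)) (u, x) := fun u x hx =>
    ((hDU.contDiffAt (hmem u x hx)).differentiableAt (by simp)).hasFDerivAt
  have hl1 : ∀ u x : ℝ, HasDerivAt (fun w : ℝ => (w, x)) ((1:ℝ), (0:ℝ)) u := fun u x =>
    (hasDerivAt_id u).prodMk (hasDerivAt_const u x)
  have hl2 : ∀ u x : ℝ, HasDerivAt (fun w : ℝ => (u, w)) ((0:ℝ), (1:ℝ)) x := fun u x =>
    (hasDerivAt_const x u).prodMk (hasDerivAt_id x)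
  have hGe : ∀ u, ∀ x ∈ J, deriv (fun u' => F (u', x)) u = fderiv ℝ F (u, x) (1, 0) :=
    fun u x hx => ((hF1 u x hx).comp_hasDerivAt u (hl1 u x)).deriv
  have hVe : ∀ u, ∀ x ∈ J, deriv (fun t' => F (u, t')) x = fderiv ℝ F (u, x) (0, 1) :=
    fun u x hx => ((hF1 u x hx).comp_hasDerivAt x (hl2 u x)).deriv
  refine ⟨fun u x => fderiv ℝ (fderiv ℝ F) (u, x) (0, 1) (1, 0),
    (hDDU.continuousOn.clm_apply continuousOn_const).clm_apply continuousOn_const,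
    (hDU.continuousOn.clm_apply continuousOn_const).congr fun z hz => hGe z.1 z.2 hz.2,
    fun u x hx => ?_, fun u x hx => ?_⟩
  · have h0 : HasDerivAt (fun w => fderiv ℝ F (u, w)) (fderiv ℝ (fderiv ℝ F) (u, x) (0, 1)) x :=
      (hF2 u x hx).comp_hasDerivAt x (hl2 u x)
    have h := h0.clm_apply (hasDerivAt_const x ((1:ℝ), (0:ℝ)))
    simp only [map_zero, add_zero] at h
    refine h.congr_of_eventuallyEq ?_
    filter_upwards [hJ.mem_nhds hx] with x' hx' using hGe u x' hx'
  · have h0 : HasDerivAt (fun w => fderiv ℝ F (w, x)) (fderiv ℝ (fderiv ℝ F) (u, x) (1, 0)) u :=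
      (hF2 u x hx).comp_hasDerivAt u (hl1 u x)
    have h := h0.clm_apply (hasDerivAt_const u ((0:ℝ), (1:ℝ)))
    simp only [map_zero, add_zero] at h
    have hsymm : IsSymmSndFDerivAt ℝ F (u, x) :=
      (hFU.contDiffAt (hmem u x hx)).isSymmSndFDerivAt
        (by
          rw [minSmoothness_of_isRCLikeNormedField]
          exact WithTop.coe_le_coe.2 (le_top (a := (2 : ℕ∞))))
    rw [hsymm.eq (1, 0) (0, 1)] at h
    exact h.congr_of_eventuallyEq (Eventually.of_forall fun u' => hVe u' x hx)

section Flow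

variable {T : ℝ} {γ : ℝ → ℝ → ℝ × ℝ}

/-- The `u`-derivative as a directional derivative of the joint map. -/
theorem hasDerivAt_fst_of_contDiffOn
    (hsmooth : ContDiffOn ℝ (⊤ : ℕ∞) (fun p : ℝ × ℝ => γ p.1 p.2) (Set.univ ×ˢ Set.Ico 0 T))
    (u : ℝ) {t : ℝ} (ht : t ∈ Set.Ico 0 T) :
    HasDerivAt (fun u' => γ u' t)
      (fderivWithin ℝ (fun p : ℝ × ℝ => γ p.1 p.2) (Set.univ ×ˢ Set.Ico 0 T) (u, t) (1, 0)) u := by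
  have h1 : HasDerivWithinAt (fun u' : ℝ => (u', t)) ((1:ℝ), (0:ℝ)) Set.univ u :=
    ((hasDerivAt_id u).prodMk (hasDerivAt_const u t)).hasDerivWithinAt
  have h2 := (hsmooth.differentiableOn (by simp) (u, t) ⟨Set.mem_univ _, ht⟩).hasFDerivWithinAt
  exact (h2.comp_hasDerivWithinAt (t := Set.univ ×ˢ Set.Ico 0 T) u h1
    fun w _ => ⟨Set.mem_univ _, ht⟩).hasDerivAt univ_mem

theorem continuousOn_clen
    (hsmooth : ContDiffOn ℝ (⊤ : ℕ∞) (fun p : ℝ × ℝ => γ p.1 p.2) (Set.univ ×ˢ Set.Ico 0 T)) :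
    ContinuousOn (clen γ) (Set.Ico 0 T) := by
  rcases le_or_gt T 0 with hT | hT
  · simp [Set.Ico_eq_empty_of_le hT]
  have hu : UniqueDiffOn ℝ ((Set.univ : Set ℝ) ×ˢ Set.Ico (0:ℝ) T) :=
    uniqueDiffOn_univ.prod (uniqueDiffOn_Ico 0 T)
  have hG : ContinuousOn (fun z : ℝ × ℝ => deriv (fun u' => γ u' z.2) z.1)
      (Set.univ ×ˢ Set.Ico 0 T) := by
    refine ((hsmooth.continuousOn_fderivWithin hu (by simp)).clm_apply
      (continuousOn_const (c := ((1:ℝ), (0:ℝ))))).congr fun z hz => ?_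
    exact (hasDerivAt_fst_of_contDiffOn hsmooth z.1 hz.2).deriv
  rw [continuousOn_iff_continuous_domRestrict]
  apply intervalIntegral.continuous_parametric_intervalIntegral_of_continuous'
    (f := fun (t : Set.Ico 0 T) u => speed (fun u' => γ u' t) u)
  have hG' : Continuous fun z : Set.Ico 0 T × ℝ => deriv (fun u' => γ u' z.1) z.2 :=
    hG.comp_continuous (f := fun z : Set.Ico 0 T × ℝ => (z.2, (z.1 : ℝ))) (by fun_prop)
      fun z => ⟨Set.mem_univ _, z.1.2⟩
  exact ((hG'.fst.pow 2).add (hG'.snd.pow 2)).sqrt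

theorem contDiff_slice
    (hsmooth : ContDiffOn ℝ (⊤ : ℕ∞) (fun p : ℝ × ℝ => γ p.1 p.2) (Set.univ ×ˢ Set.Ico 0 T))
    {t : ℝ} (ht : t ∈ Set.Ico 0 T) : ContDiff ℝ (⊤ : ℕ∞) fun u => γ u t :=
  hsmooth.comp_contDiff (f := fun u : ℝ => (u, t)) (by fun_prop) fun u => ⟨Set.mem_univ _, ht⟩

/-- First variation of length for a family of closed curves. -/
theorem hasDerivAt_clen
    (hsmooth : ContDiffOn ℝ (⊤ : ℕ∞) (fun p : ℝ × ℝ => γ p.1 p.2) (Set.univ ×ˢ Set.Ico 0 T))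
    (hper : ∀ u : ℝ, ∀ t ∈ Set.Ico (0:ℝ) T, γ (u + 2 * Real.pi) t = γ u t)
    (hreg : ∀ u : ℝ, ∀ t ∈ Set.Ico (0:ℝ) T, deriv (fun u' => γ u' t) u ≠ 0)
    (hflow : ∀ u : ℝ, ∀ t ∈ Set.Ico (0:ℝ) T,
      innerP (deriv (fun t' => γ u t') t) (nuG (fun u' => γ u' t) u)
        = - curvGSS (fun u' => γ u' t) u)
    {t : ℝ} (ht : t ∈ Set.Ioo 0 T) :
    HasDerivAt (clen γ)
      (-∫ u in (0:ℝ)..(2 * π), curvGS (fun u' => γ u' t) u ^ 2 * speed (fun u' => γ u' t) u) t := by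
  set U : Set (ℝ × ℝ) := Set.univ ×ˢ Set.Ioo 0 T
  obtain ⟨W, hWc, hGc, hGt, hVu⟩ := exists_mixed_partial isOpen_Ioo
    (hsmooth.mono (Set.prod_mono subset_rfl Set.Ioo_subset_Ico_self))
  have hico : ∀ x ∈ Set.Ioo 0 T, x ∈ Set.Ico 0 T := fun x hx => Set.Ioo_subset_Ico_self hx
  have hspos : ∀ u, ∀ x ∈ Set.Ioo 0 T, 0 < speed (fun u' => γ u' x) u := fun u x hx =>
    speed_pos (fun w => hreg w x (hico x hx)) u
  have hsc : ContinuousOn (fun z : ℝ × ℝ => speed (fun u' => γ u' z.2) z.1) U :=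
    ((hGc.fst.pow 2).add (hGc.snd.pow 2)).sqrt
  set τ : ℝ → ℝ → ℝ × ℝ := fun u x => arcDV (fun u' => γ u' x) (fun u' => γ u' x) u with hτ
  have hτc : ContinuousOn (fun z : ℝ × ℝ => τ z.1 z.2) U :=
    (hsc.inv₀ fun z hz => (hspos z.1 z.2 hz.2).ne').smul hGc
  have hst : ∀ u, ∀ x ∈ Set.Ioo 0 T, HasDerivAt (fun x' => speed (fun u' => γ u' x') u)
      ((τ u x).1 * (W u x).1 + (τ u x).2 * (W u x).2) x := by
    intro u x hx
    have hp := hspos u x hx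
    have h1 : HasDerivAt (fun x' => (deriv (fun u' => γ u' x') u).1) (W u x).1 x :=
      (hGt u x hx).fst
    have h2 : HasDerivAt (fun x' => (deriv (fun u' => γ u' x') u).2) (W u x).2 x :=
      (hGt u x hx).snd
    have hne : (deriv (fun u' => γ u' x) u).1 ^ 2 + (deriv (fun u' => γ u' x) u).2 ^ 2 ≠ 0 := by
      rw [← speed_sq]; positivity
    convert! ((h1.fun_pow 2).add (h2.fun_pow 2)).sqrt hne using 1
    change _ = _ / (2 * speed (fun u' => γ u' x) u)
    simp only [hτ, arcDV, Prod.smul_fst, Prod.smul_snd, smul_eq_mul]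
    field_simp
    norm_num
    ring
  have hderiv := hasDerivAt_intervalIntegral_of_continuousOn (a := 0) (b := 2 * π)
    (isOpen_Ioo.mem_nhds ht) (g := fun u x => speed (fun u' => γ u' x) u)
    (fun x hx => (contDiff_speed (contDiff_slice hsmooth (hico x hx))
      fun w => hreg w x (hico x hx)).continuous)
    ((hτc.fst.mul hWc.fst).add (hτc.snd.mul hWc.snd)) hst
  set c : ℝ → ℝ × ℝ := fun u' => γ u' t with hcdef
  have hc : ContDiff ℝ (⊤ : ℕ∞) c := contDiff_slice hsmooth (hico t ht)
  have hcreg : ∀ u, deriv c u ≠ 0 := fun u => hreg u t (hico t ht)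
  have hcper : c.Periodic (2 * π) := fun u => hper u t (hico t ht)
  have hkd : ContDiff ℝ (⊤ : ℕ∞) (curvG c) := contDiff_curvG hc hcreg
  have hksd : ContDiff ℝ (⊤ : ℕ∞) (curvGS c) := contDiff_arcD hc hcreg hkd
  have hv : Continuous (speed c) := (contDiff_speed hc hcreg).continuous
  set V : ℝ → ℝ × ℝ := fun u => deriv (fun t' => γ u t') t with hV
  have hVper : V.Periodic (2 * π) := by
    intro u
    apply Filter.EventuallyEq.deriv_eq
    filter_upwards [isOpen_Ioo.mem_nhds ht] with x hx using hper u x (hico x hx)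
  set P : ℝ → ℝ := fun u => (arcDV c c u).1 * (V u).1 + (arcDV c c u).2 * (V u).2
    + curvG c u * curvGS c u with hP
  have hPper : P.Periodic (2 * π) := by
    intro u
    simp only [hP, hVper u, periodic_arcDV hcper hcper u, periodic_curvG hcper u,
      show curvGS c (u + 2 * π) = curvGS c u from periodic_arcD hcper (periodic_curvG hcper) u]
  have hPd : ∀ u, HasDerivAt P ((τ u t).1 * (W u t).1 + (τ u t).2 * (W u t).2
      + curvGS c u ^ 2 * speed c u) u := by
    intro u
    have hp := hspos u t ht
    obtain ⟨h1, h2⟩ := hasDerivAt_arcDV_self hc hcreg u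
    have hV1 : HasDerivAt (fun w => (V w).1) (W u t).1 u := (hVu u t ht).fst
    have hV2 : HasDerivAt (fun w => (V w).2) (W u t).2 u := (hVu u t ht).snd
    have hk : HasDerivAt (curvG c) (speed c u * curvGS c u) u := by
      convert! (hkd.differentiable (by simp) u).hasDerivAt using 1
      rw [curvGS, arcD, mul_inv_cancel_left₀ hp.ne']
    have hks : HasDerivAt (curvGS c) (speed c u * curvGSS c u) u := by
      convert! (hksd.differentiable (by simp) u).hasDerivAt using 1
      rw [curvGSS, arcD, mul_inv_cancel_left₀ hp.ne']
    have hfl : (arcDV c c u).2 * (V u).1 - (arcDV c c u).1 * (V u).2 = -curvGSS c u := by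
      rw [← hflow u t (hico t ht)]
      simp only [innerP, nuG, arcDV, Prod.smul_fst, Prod.smul_snd, smul_eq_mul, hV, hcdef]
      ring
    convert! ((h1.mul hV1).add (h2.mul hV2)).add (hk.mul hks) using 1
    simp only [hτ, ← hcdef]
    linear_combination (-(curvG c u * speed c u)) * hfl
  have hI1 : Continuous fun u => (τ u t).1 * (W u t).1 + (τ u t).2 * (W u t).2 :=
    ((hτc.fst.mul hWc.fst).add (hτc.snd.mul hWc.snd)).comp_continuous
      (f := fun u : ℝ => (u, t)) (by fun_prop) fun u => ⟨Set.mem_univ _, ht⟩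
  have hI2 : Continuous fun u => curvGS c u ^ 2 * speed c u := (hksd.continuous.pow 2).mul hv
  have hPint := intervalIntegral.integral_eq_sub_of_hasDerivAt (a := 0) (b := 2 * π)
    (fun u _ => hPd u) ((hI1.add hI2).intervalIntegrable _ _)
  have hP0 := hPper 0
  rw [zero_add] at hP0
  rw [intervalIntegral.integral_add (hI1.intervalIntegrable _ _) (hI2.intervalIntegrable _ _),
    hP0, sub_self] at hPint
  rw [← eq_neg_of_add_eq_zero_left hPint]
  exact hderiv

end Flow

/-- improved bound: a curve diffusion flow of closed curves whose curves all
have winding number zero satisfies `L(t)⁴ ≤ L(0)⁴ − 768 π² t`, and hence `T ≤ L(0)⁴/(768 π²)`. -/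
theorem curve_diffusion_improved_time_bound
    (T : ℝ) (hT : 0 < T) (γ : ℝ → ℝ → ℝ × ℝ)
    (hsmooth : ContDiffOn ℝ (⊤ : ℕ∞) (fun p : ℝ × ℝ => γ p.1 p.2) (Set.univ ×ˢ Set.Ico 0 T))
    (hper : ∀ u : ℝ, ∀ t ∈ Set.Ico (0:ℝ) T, γ (u + 2 * Real.pi) t = γ u t)
    (hreg : ∀ u : ℝ, ∀ t ∈ Set.Ico (0:ℝ) T, deriv (fun u' => γ u' t) u ≠ 0)
    (hflow : ∀ u : ℝ, ∀ t ∈ Set.Ico (0:ℝ) T,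
      innerP (deriv (fun t' => γ u t') t) (nuG (fun u' => γ u' t) u)
        = - curvGSS (fun u' => γ u' t) u)
    (hwind : ∀ t ∈ Set.Ico (0:ℝ) T,
      ∫ u in (0:ℝ)..(2 * Real.pi), curvG (fun u' => γ u' t) u * speed (fun u' => γ u' t) u = 0) :
    (∀ t ∈ Set.Ico (0:ℝ) T, (clen γ t) ^ 4 ≤ (clen γ 0) ^ 4 - 768 * Real.pi ^ 2 * t) ∧
      T ≤ (clen γ 0) ^ 4 / (768 * Real.pi ^ 2) := by
  have hanti : AntitoneOn (fun t => clen γ t ^ 4 + 768 * π ^ 2 * t) (Set.Ico 0 T) := by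
    have hd : ∀ t ∈ Set.Ioo 0 T, HasDerivAt (fun t => clen γ t ^ 4 + 768 * π ^ 2 * t)
        (4 * clen γ t ^ 3 * (-∫ u in (0:ℝ)..(2 * π), curvGS (fun u' => γ u' t) u ^ 2 *
          speed (fun u' => γ u' t) u) + 768 * π ^ 2) t := fun t ht => by
      convert! ((hasDerivAt_clen hsmooth hper hreg hflow ht).fun_pow 4).add
        ((hasDerivAt_id t).const_mul (768 * π ^ 2)) using 1
      simp
    refine antitoneOn_of_deriv_nonpos (convex_Ico 0 T)
      (((continuousOn_clen hsmooth).pow 4).add (by fun_prop)) ?_ ?_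
    · rw [interior_Ico]
      exact fun t ht => (hd t ht).differentiableAt.differentiableWithinAt
    · rw [interior_Ico]
      intro t ht
      have htI := Set.Ioo_subset_Ico_self ht
      have hE := le_length_pow_mul_integral_curvGS_sq (contDiff_slice hsmooth htI)
        (fun u => hreg u t htI) (fun u => hper u t htI) (hwind t htI)
      rw [(hd t ht).deriv, clen]
      linarith
  have hbound : ∀ t ∈ Set.Ico (0:ℝ) T, clen γ t ^ 4 ≤ clen γ 0 ^ 4 - 768 * π ^ 2 * t := by
    intro t ht
    have := hanti ⟨le_rfl, hT⟩ ht ht.1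
    simp only [mul_zero, add_zero] at this
    linarith
  refine ⟨hbound, le_of_forall_lt_imp_le_of_dense fun t ht => ?_⟩
  have hpi : 0 < 768 * π ^ 2 := by positivity
  rw [le_div_iff₀ hpi]
  rcases le_or_gt 0 t with h0 | h0
  · nlinarith [hbound t ⟨h0, ht⟩, sq_nonneg (clen γ t ^ 2)]
  · nlinarith [sq_nonneg (clen γ 0 ^ 2)]
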